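/- Let 1 ≤ n ≤ N ≤ d, write μ̃_{[n:N]} = (μ̃_k)_{n≤k≤N} ∈ ℝ^{N−n+1}, ã_{[n:N]} = (ã_{kℓ})_{n≤k,ℓ≤N}, let 1 be the all-ones vector in ℝ^{N−n+1}, set λ' = (γ − 1^⊤(ã_{[n:N]})^{−1}μ̃_{[n:N]})/(1^⊤(ã_{[n:N]})^{−1}1) and ζ = ((1−γ)/(2γ))·(μ̃_{[n:N]} − λ'·1)^⊤(ã_{[n:N]})^{−1}(μ̃_{[n:N]} + λ'·1); assume ζ ≠ β. Define v(t,w) = f(t;ζ)^γ · w^{1−γ}/(1−γ) on [0,T]×(0,∞). Then v(T,w) = w^{1−γ}/(1−γ) for all w > 0, and for every (t,w) ∈ [0,T)×(0,∞): 0 = ∂_t v(t,w) + sup over (π,c) with π ∈ ℝ^d satisfying π_k = 0 for all k ∉ {n,…,N} and π_1 + … + π_d = 1, and c ∈ (0,∞), of [ w·∂_w v(t,w)·(r + π^⊤(μ̃ − r·1_d)) + (w²/2)·∂_{ww}v(t,w)·π^⊤ã π − c·∂_w v(t,w) + e^{−βt}·c^{1−γ}/(1−γ) ]. Moreover this supremum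 is attained at the unique maximizer π* with (π*)_k = η*_{k−n+1} for n ≤ k ≤ N and (π*)_k = 0 otherwise, where η* = (1/γ)·(ã_{[n:N]})^{−1}(μ̃_{[n:N]} + λ'·1), together with c* = e^{−(β/γ)t}·w/f(t;ζ). -/

import Mathlib

open Matrix

/-- The embedding of `{1,…,N−n+1}` into `{1,…,d}` sending `j` to rank `n−1+j`
(0-based: `j ↦ n−1+j`), used to extract the ranks `n,…,N`. -/
def rankEmb (d n N : ℕ) (hn : 1 ≤ n) (hnN : n ≤ N) (hNd : N ≤ d) :
    Fin (N - n + 1) → Fin d :=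
  fun j => ⟨n - 1 + j.val, by have := j.isLt; omega⟩

/-!
For an admissible portfolio `π` the term in `r` cancels, and for `V = K u`, with `u` the power
utility, the Hamiltonian splits as
`K w^(1-γ) (πᵀμ - (γ/2) πᵀaπ) + (e^(-βt) u(c) - c V'(w))`.
The consumption part is maximized where the marginal utility `e^(-βt) c^(-γ)` equals the price
`V'(w)`, by strict concavity of `u`. The portfolio part depends only on the block of the tradable
assets. There the Lagrange condition `γ A η = m + λ𝟙` turns the mean-variance functional on
`∑ x = 1` into its value at `η` minus `(γ/2) (x - η)ᵀA(x - η)`, and the value at `η` is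
`ζ/(1-γ)`. What is left of the HJB equation is `f' = -(ζ/γ) f - e^(-(β/γ)t)`.
-/

theorem lt_tangent_of_strictConcaveOn {s : Set ℝ} {f : ℝ → ℝ} {x y f' : ℝ}
    (hf : StrictConcaveOn ℝ s f) (hx : x ∈ s) (hy : y ∈ s) (hf' : HasDerivAt f f' x)
    (hyx : y ≠ x) : f y < f x + f' * (y - x) := by
  rcases lt_or_gt_of_ne hyx with h | h
  · have hslope := hf.lt_slope_of_hasDerivAt hy hx h hf'
    rw [slope_def_field, lt_div_iff₀ (sub_pos.mpr h)] at hslope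
    linarith
  · have hslope := hf.slope_lt_of_hasDerivAt hx hy h hf'
    rw [slope_def_field, div_lt_iff₀ (sub_pos.mpr h)] at hslope
    linarith

section PowerUtility

variable {γ : ℝ}

/-- The power (constant relative risk aversion) utility function; the logarithmic case `γ = 1`
is not covered, as the division then makes it `0`. -/
noncomputable def powerUtility (γ c : ℝ) : ℝ :=
  c ^ (1 - γ) / (1 - γ)

theorem hasDerivAt_powerUtility (hγ1 : γ ≠ 1) {c : ℝ} (hc : 0 < c) :
    HasDerivAt (powerUtility γ) (c ^ (-γ)) c := by
  have h := (Real.hasDerivAt_rpow_const (p := 1 - γ) (Or.inl hc.ne')).div_const (1 - γ)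
  rwa [mul_div_cancel_left₀ _ (sub_ne_zero.mpr hγ1.symm), sub_sub_cancel_left] at h

theorem strictConcaveOn_powerUtility (hγ : 0 < γ) (hγ1 : γ ≠ 1) :
    StrictConcaveOn ℝ (Set.Ioi 0) (powerUtility γ) := by
  refine StrictAntiOn.strictConcaveOn_of_deriv (convex_Ioi 0)
    (fun c hc => (hasDerivAt_powerUtility hγ1 hc).continuousAt.continuousWithinAt) ?_
  rw [interior_Ioi]
  exact (Real.strictAntiOn_rpow_Ioi_of_exponent_neg (neg_neg_of_pos hγ)).congr
    fun c hc => (hasDerivAt_powerUtility hγ1 hc).deriv.symm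

theorem deriv_const_mul_powerUtility (hγ1 : γ ≠ 1) (K : ℝ) {w : ℝ} (hw : 0 < w) :
    deriv (fun x => K * powerUtility γ x) w = K * w ^ (-γ) :=
  ((hasDerivAt_powerUtility hγ1 hw).const_mul K).deriv

theorem deriv_deriv_const_mul_powerUtility (hγ1 : γ ≠ 1) (K : ℝ) {w : ℝ} (hw : 0 < w) :
    deriv (deriv fun x => K * powerUtility γ x) w = K * (-γ * w ^ (-γ - 1)) := by
  have hderiv : deriv (fun x => K * powerUtility γ x) =ᶠ[nhds w] fun x => K * x ^ (-γ) := by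
    filter_upwards [lt_mem_nhds hw] with x hx using deriv_const_mul_powerUtility hγ1 K hx
  rw [hderiv.deriv_eq]
  exact ((Real.hasDerivAt_rpow_const (Or.inl hw.ne')).const_mul K).deriv

theorem mul_rpow_neg_eq_powerUtility (hγ1 : γ ≠ 1) {c : ℝ} (hc : 0 < c) :
    c * c ^ (-γ) = (1 - γ) * powerUtility γ c := by
  rw [powerUtility, mul_div_cancel₀ _ (sub_ne_zero.mpr hγ1.symm), sub_eq_add_neg,
    Real.rpow_add hc, Real.rpow_one]

theorem mul_powerUtility_sub_lt {D c c₀ : ℝ} (hγ : 0 < γ) (hγ1 : γ ≠ 1) (hD : 0 < D)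
    (hc₀ : 0 < c₀) (hc : 0 < c) (hne : c ≠ c₀) :
    D * powerUtility γ c - D * c₀ ^ (-γ) * c < D * powerUtility γ c₀ - D * c₀ ^ (-γ) * c₀ := by
  have h := mul_lt_mul_of_pos_left (lt_tangent_of_strictConcaveOn
    (strictConcaveOn_powerUtility hγ hγ1) hc₀ hc (hasDerivAt_powerUtility hγ1 hc₀) hne) hD
  linarith

end PowerUtility

section MeanVariance

variable {ι κ : Type*} [Fintype ι] [Fintype κ]

theorem dotProduct_add_const {R : Type*} [NonUnitalNonAssocSemiring R] (x m : κ → R) (c : R) :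
    x ⬝ᵥ (fun j => m j + c) = x ⬝ᵥ m + (∑ j, x j) * c := by
  simp only [dotProduct, mul_add, Finset.sum_add_distrib, Finset.sum_mul]

theorem dotProduct_sub_const {R : Type*} [NonUnitalNonAssocRing R] (x m : κ → R) (c : R) :
    x ⬝ᵥ (fun j => m j - c) = x ⬝ᵥ m - (∑ j, x j) * c := by
  simp only [sub_eq_add_neg, dotProduct_add_const, mul_neg]

/-- The mean-variance functional, with risk aversion `γ`, of a portfolio `π` of assets with
drift `μ` and covariance `a`. -/
noncomputable def meanVariance (γ : ℝ) (μ : ι → ℝ) (a : Matrix ι ι ℝ) (π : ι → ℝ) : ℝ :=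
  π ⬝ᵥ μ - γ / 2 * (π ⬝ᵥ a *ᵥ π)

theorem meanVariance_eq_sub_of_critical {γ c : ℝ} {m x y : κ → ℝ} {A : Matrix κ κ ℝ}
    (hA : A.IsSymm) (hx : γ • A *ᵥ x = fun j => m j + c) (hxy : ∑ j, y j = ∑ j, x j) :
    meanVariance γ m A y = meanVariance γ m A x - γ / 2 * ((y - x) ⬝ᵥ A *ᵥ (y - x)) := by
  have hcrit (z : κ → ℝ) : γ * (z ⬝ᵥ A *ᵥ x) = z ⬝ᵥ m + (∑ j, z j) * c := by
    rw [← dotProduct_add_const, ← hx, dotProduct_smul, smul_eq_mul]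
  have hsymm : x ⬝ᵥ A *ᵥ y = y ⬝ᵥ A *ᵥ x := by
    rw [dotProduct_mulVec, ← mulVec_transpose, hA.eq, dotProduct_comm]
  simp only [meanVariance, mulVec_sub, sub_dotProduct, dotProduct_sub]
  linear_combination hcrit x - hcrit y - γ / 2 * hsymm - c * hxy

section FullyInvested

variable [DecidableEq κ] {γ : ℝ} {m : κ → ℝ} {A : Matrix κ κ ℝ}

/-- The Lagrange multiplier (`λ'` in the statement) of the constraint `∑ x = 1` in the
maximization of `meanVariance γ m A`. -/
noncomputable def budgetMultiplier (γ : ℝ) (m : κ → ℝ) (A : Matrix κ κ ℝ) : ℝ :=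
  (γ - 1 ⬝ᵥ A⁻¹ *ᵥ m) / (1 ⬝ᵥ A⁻¹ *ᵥ 1)

/-- The maximizer (`η*` in the statement) of `meanVariance γ m A` under `∑ x = 1`. -/
noncomputable def fullyInvestedWeights (γ : ℝ) (m : κ → ℝ) (A : Matrix κ κ ℝ) : κ → ℝ :=
  (1 / γ) • A⁻¹ *ᵥ fun j => m j + budgetMultiplier γ m A

/-- The exponent `ζ` of the statement: `1 - γ` times the maximum of `meanVariance γ m A` under
`∑ x = 1`, written in terms of the inverse covariance. -/
noncomputable def growthRate (γ : ℝ) (m : κ → ℝ) (A : Matrix κ κ ℝ) : ℝ :=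
  (1 - γ) / (2 * γ) *
    ((fun j => m j - budgetMultiplier γ m A) ⬝ᵥ A⁻¹ *ᵥ fun j => m j + budgetMultiplier γ m A)

theorem smul_mulVec_fullyInvestedWeights (hγ : γ ≠ 0) (hA : A.PosDef) :
    γ • A *ᵥ fullyInvestedWeights γ m A = fun j => m j + budgetMultiplier γ m A := by
  rw [fullyInvestedWeights, mulVec_smul, smul_smul, mul_one_div_cancel hγ, one_smul,
    mulVec_mulVec, mul_nonsing_inv _ ((isUnit_iff_isUnit_det _).mp hA.isUnit), one_mulVec]

theorem sum_fullyInvestedWeights [Nonempty κ] (hγ : γ ≠ 0) (hA : A.PosDef) :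
    ∑ j, fullyInvestedWeights γ m A j = 1 := by
  have hpos : 0 < 1 ⬝ᵥ A⁻¹ *ᵥ (1 : κ → ℝ) := by
    simpa only [star_trivial] using hA.inv.dotProduct_mulVec_pos one_ne_zero
  have hsplit : (fun j => m j + budgetMultiplier γ m A) = m + budgetMultiplier γ m A • 1 := by
    ext j; simp
  rw [← one_dotProduct, fullyInvestedWeights, hsplit, mulVec_add, mulVec_smul, dotProduct_smul,
    dotProduct_add, dotProduct_smul, smul_eq_mul, smul_eq_mul, budgetMultiplier,
    div_mul_cancel₀ _ hpos.ne', add_sub_cancel, one_div_mul_cancel hγ]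

theorem meanVariance_lt_fullyInvestedWeights [Nonempty κ] (hγ : 0 < γ) (hA : A.PosDef)
    {x : κ → ℝ} (hx : ∑ j, x j = 1) (hne : x ≠ fullyInvestedWeights γ m A) :
    meanVariance γ m A x < meanVariance γ m A (fullyInvestedWeights γ m A) := by
  have hsymm : A.IsSymm := (conjTranspose_eq_transpose_of_trivial A).symm.trans hA.isHermitian.eq
  have hpos := hA.dotProduct_mulVec_pos (sub_ne_zero.mpr hne)
  rw [star_trivial] at hpos
  rw [meanVariance_eq_sub_of_critical hsymm (smul_mulVec_fullyInvestedWeights hγ.ne' hA)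
    (hx.trans (sum_fullyInvestedWeights hγ.ne' hA).symm)]
  exact sub_lt_self _ (mul_pos (half_pos hγ) hpos)

theorem growthRate_eq_mul_meanVariance [Nonempty κ] (hγ : γ ≠ 0) (hA : A.PosDef) :
    growthRate γ m A = (1 - γ) * meanVariance γ m A (fullyInvestedWeights γ m A) := by
  let η := fullyInvestedWeights γ m A
  let c := budgetMultiplier γ m A
  have hsum : ∑ j, η j = 1 := sum_fullyInvestedWeights hγ hA
  have hvar : γ * (η ⬝ᵥ A *ᵥ η) = η ⬝ᵥ m + c := by
    rw [← smul_eq_mul, ← dotProduct_smul, smul_mulVec_fullyInvestedWeights hγ hA,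
      dotProduct_add_const, hsum, one_mul]
  have hmean : growthRate γ m A = (1 - γ) / 2 * (η ⬝ᵥ fun j => m j - c) := by
    rw [dotProduct_comm]
    simp only [η, c, fullyInvestedWeights, growthRate, dotProduct_smul, smul_eq_mul]
    field_simp
  rw [hmean, dotProduct_sub_const, hsum, meanVariance]
  linear_combination (1 - γ) / 2 * hvar

end FullyInvested

section OpenMarket

variable {e : κ ↪ ι}

/-- The combined constraint on a portfolio `π`: investment only in the assets in the range of
`e` (open market), and weights summing to one (fully invested). -/
def IsAdmissible (e : κ ↪ ι) (π : ι → ℝ) : Prop :=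
  (∀ k ∉ Set.range e, π k = 0) ∧ ∑ k, π k = 1

theorem sum_extend_zero {M : Type*} [AddCommMonoid M] (e : κ ↪ ι) (x : κ → M) :
    ∑ k, Function.extend e x 0 k = ∑ j, x j :=
  (Fintype.sum_of_injective e e.injective _ _
    (fun k hk => Function.extend_apply' x (0 : ι → M) k hk)
    fun j => (e.injective.extend_apply x 0 j).symm).symm

theorem extend_zero_dotProduct {R : Type*} [NonUnitalNonAssocSemiring R] (e : κ ↪ ι) (x : κ → R)
    (g : ι → R) : Function.extend e x 0 ⬝ᵥ g = x ⬝ᵥ (g ∘ e) :=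
  (Fintype.sum_of_injective e e.injective _ _
    (fun k hk => by rw [Function.extend_apply' _ _ _ hk, Pi.zero_apply, zero_mul])
    fun j => by rw [e.injective.extend_apply, Function.comp_apply]).symm

theorem isAdmissible_iff_exists_extend {π : ι → ℝ} :
    IsAdmissible e π ↔ ∃ x : κ → ℝ, ∑ j, x j = 1 ∧ Function.extend e x 0 = π := by
  constructor
  · rintro ⟨hsupp, hsum⟩
    have hext : Function.extend e (π ∘ e) 0 = π := by
      ext k
      by_cases hk : k ∈ Set.range e
      · obtain ⟨j, rfl⟩ := hk
        exact e.injective.extend_apply _ _ j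
      · rw [Function.extend_apply' _ _ _ hk, hsupp k hk, Pi.zero_apply]
    exact ⟨π ∘ e, by rw [← sum_extend_zero e, hext, hsum], hext⟩
  · rintro ⟨x, hx, rfl⟩
    exact ⟨fun k hk => Function.extend_apply' _ _ _ hk, (sum_extend_zero e x).trans hx⟩

theorem meanVariance_extend (γ : ℝ) (μ : ι → ℝ) (a : Matrix ι ι ℝ) (e : κ ↪ ι) (x : κ → ℝ) :
    meanVariance γ μ a (Function.extend e x 0) =
      meanVariance γ (μ ∘ e) (a.submatrix e e) x := by
  have hblock : (a *ᵥ Function.extend e x 0) ∘ e = a.submatrix e e *ᵥ x := by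
    ext j
    rw [Function.comp_apply, mulVec, dotProduct_comm, extend_zero_dotProduct, dotProduct_comm]
    rfl
  rw [meanVariance, meanVariance, extend_zero_dotProduct, extend_zero_dotProduct, hblock]

variable [DecidableEq κ] [Nonempty κ] {γ : ℝ} {μ : ι → ℝ} {a : Matrix ι ι ℝ}

/-- The optimal admissible portfolio `π*`: the fully invested optimum of the tradable assets,
extended by zero. -/
noncomputable def openMarketWeights (γ : ℝ) (μ : ι → ℝ) (a : Matrix ι ι ℝ) (e : κ ↪ ι) : ι → ℝ :=
  Function.extend e (fullyInvestedWeights γ (μ ∘ e) (a.submatrix e e)) 0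

theorem isAdmissible_openMarketWeights (hγ : γ ≠ 0) (ha : (a.submatrix e e).PosDef) :
    IsAdmissible e (openMarketWeights γ μ a e) :=
  isAdmissible_iff_exists_extend.mpr ⟨_, sum_fullyInvestedWeights hγ ha, rfl⟩

theorem meanVariance_lt_openMarketWeights (hγ : 0 < γ) (ha : (a.submatrix e e).PosDef)
    {π : ι → ℝ} (hπ : IsAdmissible e π) (hne : π ≠ openMarketWeights γ μ a e) :
    meanVariance γ μ a π < meanVariance γ μ a (openMarketWeights γ μ a e) := by
  obtain ⟨x, hx, rfl⟩ := isAdmissible_iff_exists_extend.mp hπ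
  rw [openMarketWeights, meanVariance_extend, meanVariance_extend]
  exact meanVariance_lt_fullyInvestedWeights hγ ha hx fun h => hne (by rw [h, openMarketWeights])

theorem growthRate_eq_mul_meanVariance_openMarketWeights (hγ : γ ≠ 0)
    (ha : (a.submatrix e e).PosDef) :
    growthRate γ (μ ∘ e) (a.submatrix e e) =
      (1 - γ) * meanVariance γ μ a (openMarketWeights γ μ a e) := by
  rw [openMarketWeights, meanVariance_extend, growthRate_eq_mul_meanVariance hγ ha]

end OpenMarket

end MeanVariance

section Hamiltonian

variable {ι κ : Type*} [Fintype ι] [Fintype κ] {γ β r t w : ℝ} {μ π : ι → ℝ} {a : Matrix ι ι ℝ}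

/-- The expression maximized in the HJB equation, for a function `V` of wealth in place of
`v(t, ·)`. -/
noncomputable def hamiltonian (γ β r : ℝ) (μ : ι → ℝ) (a : Matrix ι ι ℝ) (V : ℝ → ℝ) (t w : ℝ)
    (π : ι → ℝ) (c : ℝ) : ℝ :=
  w * deriv V w * (r + π ⬝ᵥ fun i => μ i - r) + w ^ 2 / 2 * deriv (deriv V) w * (π ⬝ᵥ a *ᵥ π) -
    c * deriv V w + Real.exp (-β * t) * powerUtility γ c

theorem hamiltonian_const_mul_powerUtility (hγ1 : γ ≠ 1) (K : ℝ) (hw : 0 < w)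
    (hπ : ∑ k, π k = 1) (c : ℝ) :
    hamiltonian γ β r μ a (fun x => K * powerUtility γ x) t w π c =
      K * w ^ (1 - γ) * meanVariance γ μ a π +
        (Real.exp (-β * t) * powerUtility γ c - K * w ^ (-γ) * c) := by
  have hpow : w * w ^ (-γ) = w ^ (1 - γ) := by
    rw [sub_eq_add_neg, Real.rpow_add hw, Real.rpow_one]
  have hpow' : w ^ 2 * w ^ (-γ - 1) = w ^ (1 - γ) := by
    rw [Real.rpow_sub_one hw.ne', ← hpow]
    field_simp
  rw [hamiltonian, dotProduct_sub_const, hπ, deriv_const_mul_powerUtility hγ1 K hw,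
    deriv_deriv_const_mul_powerUtility hγ1 K hw, meanVariance]
  linear_combination K * (π ⬝ᵥ μ) * hpow - K * γ / 2 * (π ⬝ᵥ a *ᵥ π) * hpow'

theorem hamiltonian_lt_optimum [DecidableEq κ] [Nonempty κ] {e : κ ↪ ι} {K c c₀ : ℝ} (hγ : 0 < γ)
    (hγ1 : γ ≠ 1) (ha : (a.submatrix e e).PosDef) (hK : 0 < K) (hw : 0 < w) (hc₀ : 0 < c₀)
    (hprice : K * w ^ (-γ) = Real.exp (-β * t) * c₀ ^ (-γ)) (hπ : IsAdmissible e π) (hc : 0 < c)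
    (hne : π = openMarketWeights γ μ a e → c ≠ c₀) :
    hamiltonian γ β r μ a (fun x => K * powerUtility γ x) t w π c <
      hamiltonian γ β r μ a (fun x => K * powerUtility γ x) t w
        (openMarketWeights γ μ a e) c₀ := by
  have hopt : IsAdmissible e (openMarketWeights γ μ a e) := isAdmissible_openMarketWeights hγ.ne' ha
  have hconsume (h : c ≠ c₀) :=
    mul_powerUtility_sub_lt hγ hγ1 (Real.exp_pos (-β * t)) hc₀ hc h
  rw [hamiltonian_const_mul_powerUtility hγ1 K hw hπ.2,
    hamiltonian_const_mul_powerUtility hγ1 K hw hopt.2, hprice]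
  by_cases hππ : π = openMarketWeights γ μ a e
  · rw [hππ]
    exact add_lt_add_right (hconsume (hne hππ)) _
  · refine add_lt_add_of_lt_of_le (mul_lt_mul_of_pos_left
      (meanVariance_lt_openMarketWeights hγ ha hπ hππ) (by positivity)) ?_
    rcases eq_or_ne c c₀ with rfl | h
    · exact le_rfl
    · exact (hconsume h).le

end Hamiltonian

section TimeFactor

variable {γ β T ν t w : ℝ}

/-- The function `f(t; ν)`; for `ν = β` the division makes the second summand `0`. -/
noncomputable def timeFactor (γ β T ν t : ℝ) : ℝ :=
  Real.exp ((ν / γ) * (T - t)) +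
    (γ / (ν - β)) * Real.exp (-(ν / γ) * t) *
      (Real.exp (((ν - β) / γ) * T) - Real.exp (((ν - β) / γ) * t))

theorem timeFactor_terminal (γ β T ν : ℝ) : timeFactor γ β T ν T = 1 := by
  simp [timeFactor]

theorem hasDerivAt_timeFactor (hγ : γ ≠ 0) (hνβ : ν ≠ β) (T t : ℝ) :
    HasDerivAt (timeFactor γ β T ν)
      (-(ν / γ) * timeFactor γ β T ν t - Real.exp (-(β / γ) * t)) t := by
  have hexp (k : ℝ) : HasDerivAt (fun s => Real.exp (k * s)) (Real.exp (k * t) * (k * 1)) t :=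
    ((hasDerivAt_id t).const_mul k).exp
  have hterminal := (((hasDerivAt_id t).const_sub T).const_mul (ν / γ)).exp
  have h := hterminal.add (((hexp (-(ν / γ))).const_mul (γ / (ν - β))).mul
    ((hexp ((ν - β) / γ)).const_sub (Real.exp (((ν - β) / γ) * T))))
  refine h.congr_deriv ?_
  have hsplit : Real.exp (-(β / γ) * t) =
      Real.exp (-(ν / γ) * t) * Real.exp (((ν - β) / γ) * t) := by
    rw [← Real.exp_add]
    ring_nf
  have hcancel : γ / (ν - β) * ((ν - β) / γ) = 1 := by
    rw [div_mul_div_cancel₀ (sub_ne_zero.mpr hνβ), div_self hγ]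
  rw [hsplit, timeFactor, id]
  linear_combination (-Real.exp (-(ν / γ) * t) * Real.exp (((ν - β) / γ) * t)) * hcancel

theorem exp_sub_exp_div_nonneg {k s t : ℝ} (h : s ≤ t) :
    0 ≤ (Real.exp (k * t) - Real.exp (k * s)) / k := by
  rcases le_total 0 k with hk | hk
  · exact div_nonneg (sub_nonneg.mpr (Real.exp_le_exp.mpr (mul_le_mul_of_nonneg_left h hk))) hk
  · exact div_nonneg_of_nonpos
      (sub_nonpos.mpr (Real.exp_le_exp.mpr (mul_le_mul_of_nonpos_left h hk))) hk

theorem timeFactor_pos (γ β ν : ℝ) (ht : t ≤ T) : 0 < timeFactor γ β T ν t := by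
  have h := mul_nonneg (Real.exp_pos (-(ν / γ) * t)).le
    (exp_sub_exp_div_nonneg (k := (ν - β) / γ) ht)
  refine add_pos_of_pos_of_nonneg (Real.exp_pos _) (h.trans_eq ?_)
  rw [div_div_eq_mul_div]
  ring

/-- The candidate value function `v(t, w)`. -/
noncomputable def valueFunction (γ β T ν t w : ℝ) : ℝ :=
  timeFactor γ β T ν t ^ γ * powerUtility γ w

/-- The candidate optimal consumption rate `c*`. -/
noncomputable def optimalConsumption (γ β T ν t w : ℝ) : ℝ :=
  Real.exp (-(β / γ) * t) * w / timeFactor γ β T ν t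

theorem optimalConsumption_pos (γ β ν : ℝ) (ht : t ≤ T) (hw : 0 < w) :
    0 < optimalConsumption γ β T ν t w :=
  div_pos (mul_pos (Real.exp_pos _) hw) (timeFactor_pos γ β ν ht)

theorem timeFactor_rpow_mul_rpow_neg (hγ : γ ≠ 0) (β ν : ℝ) (ht : t ≤ T) (hw : 0 < w) :
    timeFactor γ β T ν t ^ γ * w ^ (-γ) =
      Real.exp (-β * t) * optimalConsumption γ β T ν t w ^ (-γ) := by
  have hf := timeFactor_pos γ β ν ht
  have hexp : Real.exp (-(β / γ) * t) ^ (-γ) = (Real.exp (-β * t))⁻¹ := by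
    rw [← Real.exp_mul, ← Real.exp_neg]
    field_simp
  rw [optimalConsumption, Real.div_rpow (by positivity) hf.le,
    Real.mul_rpow (Real.exp_pos _).le hw.le, hexp, Real.rpow_neg hf.le, div_inv_eq_mul, mul_assoc,
    mul_inv_cancel_left₀ (Real.exp_ne_zero _), mul_comm]

theorem hasDerivAt_valueFunction (hγ : γ ≠ 0) (hνβ : ν ≠ β) (ht : t ≤ T) (hw : 0 < w) :
    HasDerivAt (fun s => valueFunction γ β T ν s w)
      (-(timeFactor γ β T ν t ^ γ * powerUtility γ w *
        (ν + γ * optimalConsumption γ β T ν t w / w))) t := by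
  have hf := timeFactor_pos γ β ν ht
  refine (((hasDerivAt_timeFactor hγ hνβ T t).rpow_const (p := γ)
    (Or.inl hf.ne')).mul_const (powerUtility γ w)).congr_deriv ?_
  rw [optimalConsumption, Real.rpow_sub_one hf.ne']
  field_simp
  ring

end TimeFactor

section HJB

variable {ι κ : Type*} [Fintype ι] [Fintype κ] [DecidableEq κ] [Nonempty κ] {γ : ℝ} {μ : ι → ℝ}
  {a : Matrix ι ι ℝ} {e : κ ↪ ι}

theorem hamiltonian_optimum (hγ : γ ≠ 0) (hγ1 : γ ≠ 1) (ha : (a.submatrix e e).PosDef)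
    (β r ν : ℝ) {T t w : ℝ} (ht : t ≤ T) (hw : 0 < w) :
    hamiltonian γ β r μ a (valueFunction γ β T ν t) t w (openMarketWeights γ μ a e)
        (optimalConsumption γ β T ν t w) =
      timeFactor γ β T ν t ^ γ * powerUtility γ w *
        (growthRate γ (μ ∘ e) (a.submatrix e e) +
          γ * optimalConsumption γ β T ν t w / w) := by
  set c := optimalConsumption γ β T ν t w
  set K := timeFactor γ β T ν t ^ γ
  have hc : 0 < c := optimalConsumption_pos γ β ν ht hw
  have hg : 1 - γ ≠ 0 := sub_ne_zero.mpr hγ1.symm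
  have hprice : K * w ^ (-γ) = Real.exp (-β * t) * c ^ (-γ) :=
    timeFactor_rpow_mul_rpow_neg hγ β ν ht hw
  have hutility : Real.exp (-β * t) * powerUtility γ c = K * w ^ (-γ) * c / (1 - γ) := by
    rw [hprice, eq_div_iff hg]
    linear_combination -Real.exp (-β * t) * mul_rpow_neg_eq_powerUtility hγ1 hc
  have hw_utility : K * w ^ (-γ) = (1 - γ) * (K * powerUtility γ w) / w := by
    rw [eq_div_iff hw.ne']
    linear_combination K * mul_rpow_neg_eq_powerUtility hγ1 hw
  have hpow : w ^ (1 - γ) = (1 - γ) * powerUtility γ w := (mul_div_cancel₀ _ hg).symm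
  refine (hamiltonian_const_mul_powerUtility hγ1 K hw
    (isAdmissible_openMarketWeights hγ ha).2 c).trans ?_
  rw [hutility, hw_utility, hpow, growthRate_eq_mul_meanVariance_openMarketWeights hγ ha]
  field_simp
  ring

theorem stmt9_general (hγ : 0 < γ) (hγ1 : γ ≠ 1) (β T r : ℝ) (ha : (a.submatrix e e).PosDef)
    {ζ : ℝ} (hζ : ζ = growthRate γ (μ ∘ e) (a.submatrix e e)) (hζβ : ζ ≠ β) :
    (∀ w, valueFunction γ β T ζ T w = powerUtility γ w) ∧
    ∀ t ≤ T, ∀ w, 0 < w →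
      let H := hamiltonian γ β r μ a (valueFunction γ β T ζ t) t w
      let πs := openMarketWeights γ μ a e
      let cs := optimalConsumption γ β T ζ t w
      (0 = deriv (fun s => valueFunction γ β T ζ s w) t + H πs cs) ∧
      (IsAdmissible e πs ∧ 0 < cs) ∧
      (∀ π, IsAdmissible e π → ∀ c, 0 < c → H π c ≤ H πs cs) ∧
      (∀ π, IsAdmissible e π → ∀ c, 0 < c → H π c = H πs cs → π = πs ∧ c = cs) := by
  refine ⟨fun w => by rw [valueFunction, timeFactor_terminal, Real.one_rpow, one_mul],
    fun t ht w hw => ?_⟩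
  intro H πs cs
  have hcs : 0 < cs := optimalConsumption_pos γ β ζ ht hw
  have hlt (π : ι → ℝ) (hπ : IsAdmissible e π) (c : ℝ) (hc : 0 < c) (hne : π = πs → c ≠ cs) :
      H π c < H πs cs :=
    hamiltonian_lt_optimum hγ hγ1 ha (Real.rpow_pos_of_pos (timeFactor_pos γ β ζ ht) γ) hw hcs
      (timeFactor_rpow_mul_rpow_neg hγ.ne' β ζ ht hw) hπ hc hne
  refine ⟨?_, ⟨isAdmissible_openMarketWeights hγ.ne' ha, hcs⟩, fun π hπ c hc => ?_,
    fun π hπ c hc heq => ?_⟩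
  · have hopt : H πs cs = _ := hamiltonian_optimum hγ.ne' hγ1 ha β r ζ ht hw
    rw [(hasDerivAt_valueFunction hγ.ne' hζβ ht hw).deriv, hopt, ← hζ, neg_add_cancel]
  · by_cases h : π = πs ∧ c = cs
    · rw [h.1, h.2]
    · exact (hlt π hπ c hc (not_and.mp h)).le
  · by_contra h
    exact (hlt π hπ c hc (not_and.mp h)).ne heq

end HJB

section RankEmb

variable {d n N : ℕ} (hn : 1 ≤ n) (hnN : n ≤ N) (hNd : N ≤ d)

theorem rankEmb_injective : Function.Injective (rankEmb d n N hn hnN hNd) := fun _ _ h =>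
  Fin.ext (Nat.add_left_cancel (congrArg Fin.val h))

theorem mem_range_rankEmb {k : Fin d} :
    k ∈ Set.range (rankEmb d n N hn hnN hNd) ↔ n ≤ k.val + 1 ∧ k.val + 1 ≤ N := by
  constructor
  · rintro ⟨j, rfl⟩
    simp only [rankEmb]
    omega
  · exact fun h => ⟨⟨k.val + 1 - n, Nat.lt_add_one_of_le (Nat.sub_le_sub_right h.2 n)⟩,
      Fin.ext (by simp only [rankEmb]; omega)⟩

theorem extend_rankEmb (x : Fin (N - n + 1) → ℝ) :
    Function.extend (rankEmb d n N hn hnN hNd) x 0 = fun k : Fin d =>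
      if h : n ≤ k.val + 1 ∧ k.val + 1 ≤ N then
        x ⟨k.val + 1 - n, Nat.lt_add_one_of_le (Nat.sub_le_sub_right h.2 n)⟩
      else 0 := by
  ext k
  by_cases hk : n ≤ k.val + 1 ∧ k.val + 1 ≤ N
  · have hval : rankEmb d n N hn hnN hNd
        ⟨k.val + 1 - n, Nat.lt_add_one_of_le (Nat.sub_le_sub_right hk.2 n)⟩ = k :=
      Fin.ext (by simp only [rankEmb]; omega)
    rw [dif_pos hk, ← (rankEmb_injective hn hnN hNd).extend_apply x 0, hval]
  · rw [dif_neg hk, Function.extend_apply' _ _ _ fun h => hk ((mem_range_rankEmb hn hnN hNd).mp h),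
      Pi.zero_apply]

end RankEmb

/-- HJB under combined open market and fully invested constraints.
With `λ' = (γ − 𝟙ᵀ(ã_{[n:N]})⁻¹μ̃_{[n:N]})/(𝟙ᵀ(ã_{[n:N]})⁻¹𝟙)`,
`ζ = ((1−γ)/(2γ))(μ̃_{[n:N]}−λ'𝟙)ᵀ(ã_{[n:N]})⁻¹(μ̃_{[n:N]}+λ'𝟙) ≠ β` and
`v(t,w) = f(t;ζ)^γ·w^(1−γ)/(1−γ)`, one has `v(T,w) = w^(1−γ)/(1−γ)` and, for
`(t,w) ∈ [0,T)×(0,∞)`, `0 = ∂ₜv + sup H(π,c)` where the supremum runs over `c ∈ (0,∞)`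
and `π ∈ ℝ^d` with `π_k = 0` for ranks `k ∉ {n,…,N}` and `π₁+⋯+π_d = 1`; it is attained
at the unique maximizer `π*` supported on ranks `n,…,N` given there by
`η* = (1/γ)(ã_{[n:N]})⁻¹(μ̃_{[n:N]}+λ'𝟙)`, together with `c* = e^{−(β/γ)t}·w/f(t;ζ)`. -/
theorem stmt9 (γ β T : ℝ) (hγ : 0 < γ) (hγ1 : γ ≠ 1) (hβ : 0 < β) (hT : 0 < T)
    (d : ℕ) (hd : 1 ≤ d) (r : ℝ) (μ : Fin d → ℝ) (a : Matrix (Fin d) (Fin d) ℝ)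
    (ha : a.PosDef)
    (n N : ℕ) (hn : 1 ≤ n) (hnN : n ≤ N) (hNd : N ≤ d)
    (aS : Matrix (Fin (N - n + 1)) (Fin (N - n + 1)) ℝ)
    (haS : aS = a.submatrix (rankEmb d n N hn hnN hNd) (rankEmb d n N hn hnN hNd))
    (μS : Fin (N - n + 1) → ℝ) (hμS : μS = μ ∘ rankEmb d n N hn hnN hNd)
    (lam : ℝ)
    (hlam : lam = (γ - (fun _ => (1 : ℝ)) ⬝ᵥ aS⁻¹.mulVec μS) /
      ((fun _ => (1 : ℝ)) ⬝ᵥ aS⁻¹.mulVec (fun _ => (1 : ℝ))))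
    (ζ : ℝ)
    (hζ : ζ = (1 - γ) / (2 * γ) *
      ((fun j => μS j - lam) ⬝ᵥ aS⁻¹.mulVec (fun j => μS j + lam)))
    (hζβ : ζ ≠ β)
    (f : ℝ → ℝ)
    (hf : ∀ t : ℝ, f t =
      Real.exp ((ζ / γ) * (T - t)) +
        (γ / (ζ - β)) * Real.exp (-(ζ / γ) * t) *
          (Real.exp (((ζ - β) / γ) * T) - Real.exp (((ζ - β) / γ) * t)))
    (v : ℝ → ℝ → ℝ)
    (hv : ∀ t w : ℝ, v t w = f t ^ γ * w ^ (1 - γ) / (1 - γ))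
    (H : ℝ → ℝ → (Fin d → ℝ) → ℝ → ℝ)
    (hH : ∀ t w : ℝ, ∀ π : Fin d → ℝ, ∀ c : ℝ, H t w π c =
      w * deriv (v t) w * (r + π ⬝ᵥ (fun i => μ i - r))
        + w ^ 2 / 2 * deriv (deriv (v t)) w * (π ⬝ᵥ a.mulVec π)
        - c * deriv (v t) w + Real.exp (-β * t) * c ^ (1 - γ) / (1 - γ))
    (ηs : Fin (N - n + 1) → ℝ)
    (hηs : ηs = (1 / γ) • aS⁻¹.mulVec (fun j => μS j + lam))
    (πs : Fin d → ℝ)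
    (hπs : πs = fun k : Fin d =>
      if h : n ≤ k.val + 1 ∧ k.val + 1 ≤ N then ηs ⟨k.val + 1 - n, by omega⟩ else 0)
    (cs : ℝ → ℝ → ℝ) (hcs : ∀ t w : ℝ, cs t w = Real.exp (-(β / γ) * t) * w / f t) :
    (∀ w : ℝ, 0 < w → v T w = w ^ (1 - γ) / (1 - γ)) ∧
    ∀ t ∈ Set.Ico 0 T, ∀ w : ℝ, 0 < w →
      (0 = deriv (fun s => v s w) t + H t w πs (cs t w)) ∧
      ((∀ k : Fin d, ¬(n ≤ k.val + 1 ∧ k.val + 1 ≤ N) → πs k = 0) ∧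
        (∑ k, πs k) = 1 ∧ 0 < cs t w) ∧
      (∀ π : Fin d → ℝ, (∀ k : Fin d, ¬(n ≤ k.val + 1 ∧ k.val + 1 ≤ N) → π k = 0) →
        (∑ k, π k) = 1 → ∀ c : ℝ, 0 < c → H t w π c ≤ H t w πs (cs t w)) ∧
      (∀ π : Fin d → ℝ, (∀ k : Fin d, ¬(n ≤ k.val + 1 ∧ k.val + 1 ≤ N) → π k = 0) →
        (∑ k, π k) = 1 → ∀ c : ℝ, 0 < c →
          H t w π c = H t w πs (cs t w) → π = πs ∧ c = cs t w) := by
  subst haS hμS hlam hηs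
  let e : Fin (N - n + 1) ↪ Fin d := ⟨rankEmb d n N hn hnN hNd, rankEmb_injective hn hnN hNd⟩
  obtain rfl : f = timeFactor γ β T ζ := funext hf
  obtain rfl : v = valueFunction γ β T ζ := funext₂ fun t w => (hv t w).trans (mul_div_assoc _ _ _)
  obtain rfl : H = fun t => hamiltonian γ β r μ a (valueFunction γ β T ζ t) t := by
    ext t w π c
    rw [hH, mul_div_assoc]
    rfl
  obtain rfl : πs = openMarketWeights γ μ a e :=
    hπs.trans (extend_rankEmb hn hnN hNd _).symm
  obtain rfl : cs = optimalConsumption γ β T ζ := funext₂ hcs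
  have hadm (π : Fin d → ℝ) : IsAdmissible e π ↔
      (∀ k : Fin d, ¬(n ≤ k.val + 1 ∧ k.val + 1 ≤ N) → π k = 0) ∧ ∑ k, π k = 1 := by
    simp only [IsAdmissible, ← mem_range_rankEmb hn hnN hNd]
    rfl
  have h := stmt9_general hγ hγ1 β T r (ha.submatrix e.injective) hζ hζβ
  simp only [hadm, and_imp, and_assoc] at h ⊢
  exact ⟨fun w _ => h.1 w, fun t ht => h.2 t ht.2.le⟩
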